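/- arXiv:1410.6740 — 4 statements merged into one kernel-verified Lean document; each statement's English description precedes it below -/
import Mathlib

section
/- Let F : E → B be a Kumjian-Pask fibration. Then the image F(E) of F (the subcategory of B whose objects are the F(X) for objects X of E and whose morphisms are the F(μ) for morphisms μ of E) is a strongly right Ore category, and the corestricted functor F̂ : E → F(E) is a strongly surjective Kumjian-Pask fibration. -/
/-!
The point is that local splitness makes the image a *sieve* in `B`: a section of
`E/X ⥤ B/F(X)` lifts every morphism `M ⟶ F(X)` of `B` to a morphism of `E` with target `X`
(`LocallySplit.exists_lift`). Hence a morphism of `B` belongs to the image as soon as its target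
is an object of the image (`LocallySplit.inImage_iff`), and the image subcategory is the full
subcategory on `F(Ob E)`, closed under arbitrary precomposition.

Consequently every span of `B` witnessing an Ore condition for data in the image already lies in
the image, so the image inherits the strong right Ore property. The inclusion of the image is
injective on objects and faithful, so lifts of factorizations along the corestriction are the same
as lifts along `F`, and a section for `F` restricts, after cancelling the inclusion
(`functor_cancel`), to a section for the corestriction.
-/


open CategoryTheory

universe v u v' u' v'' u''

namespace DCFpaper

variable {E : Type u} [Category.{v} E] {B : Type u'} [Category.{v'} B]

/-- Equality of morphisms with possibly different (but equal) endpoints. -/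
def MorEq {C : Type u''} [Category.{v''} C] {W X Y Z : C} (f : W ⟶ X) (g : Y ⟶ Z) : Prop :=
  ∃ (h₁ : W = Y) (h₂ : X = Z), f = eqToHom h₁ ≫ g ≫ eqToHom h₂.symm

/-- A lift of a factorization `F φ = l ≫ ρ` to a factorization of `φ`. -/
structure ConducheLift (F : E ⥤ B) {Y X : E} (φ : Y ⟶ X) {M : B}
    (l : F.obj Y ⟶ M) (ρ : M ⟶ F.obj X) where
  mid : E
  lam : Y ⟶ mid
  rho : mid ⟶ X
  comp_eq : lam ≫ rho = φ
  obj_eq : F.obj mid = M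
  map_lam : F.map lam = l ≫ eqToHom obj_eq.symm
  map_rho : F.map rho = eqToHom obj_eq ≫ ρ

/-- Discrete Conduché fibration: unique factorization lifting. -/
def IsDCF (F : E ⥤ B) : Prop :=
  ∀ {Y X : E} (φ : Y ⟶ X) {M : B} (l : F.obj Y ⟶ M) (ρ : M ⟶ F.obj X),
    F.map φ = l ≫ ρ →
      Nonempty (ConducheLift F φ l ρ) ∧ ∀ L L' : ConducheLift F φ l ρ, L = L'

/-- Right Ore condition: every cospan can be completed to a commutative square. -/
def RightOre (C : Type u'') [Category.{v''} C] : Prop :=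
  ∀ {A X D : C} (m : A ⟶ D) (n : X ⟶ D),
    ∃ (P : C) (p : P ⟶ A) (q : P ⟶ X), p ≫ m = q ≫ n

/-- Strongly right Ore. -/
def StronglyRightOre (C : Type u'') [Category.{v''} C] : Prop :=
  RightOre C ∧
    ∀ {A X D Z₁ Z₂ : C} (m : A ⟶ D) (n : X ⟶ D)
      (p₁ : Z₁ ⟶ A) (q₁ : Z₁ ⟶ X) (p₂ : Z₂ ⟶ A) (q₂ : Z₂ ⟶ X),
      p₁ ≫ m = q₁ ≫ n → p₂ ≫ m = q₂ ≫ n →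
        ∃ (W : C) (a : W ⟶ Z₁) (b : W ⟶ Z₂), a ≫ p₁ = b ≫ p₂ ∧ a ≫ q₁ = b ≫ q₂

/-- Locally split: each induced slice functor admits a section. -/
def LocallySplit (F : E ⥤ B) : Prop :=
  ∀ X : E, ∃ x : Over (F.obj X) ⥤ Over X, x ⋙ Over.post F = 𝟭 (Over (F.obj X))

/-- Kumjian-Pask fibration. -/
def IsKPF (F : E ⥤ B) : Prop :=
  IsDCF F ∧ LocallySplit F ∧ StronglyRightOre B

/-- Row-finite functor. -/
def RowFinite (F : E ⥤ B) : Prop :=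
  ∀ (X : E) {M : B} (b : M ⟶ F.obj X),
    {p : Σ Y : E, Y ⟶ X | ∃ h : F.obj p.1 = M, F.map p.2 = eqToHom h ≫ b}.Finite

/-- Strongly surjective functor. -/
def StronglySurjective (F : E ⥤ B) : Prop :=
  Function.Surjective F.obj ∧
    ∀ (X : E) {M : B} (b : M ⟶ F.obj X),
      ∃ (Y : E) (α : Y ⟶ X) (h : F.obj Y = M), F.map α = eqToHom h ≫ b

/-- An infinite path to `X`: a section of the induced slice functor. -/
structure InfPath (F : E ⥤ B) (X : E) where
  fn : Over (F.obj X) ⥤ Over X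
  sec : fn ⋙ Over.post F = 𝟭 (Over (F.obj X))

/-- The infinite path space `F^∞`. -/
def FInf (F : E ⥤ B) := Σ X : E, InfPath F X

/-- `x ∈ Z(μ)` for `x` an infinite path to the target of `μ`. -/
abbrev InPathOf {F : E ⥤ B} {Y X : E} (μ : Y ⟶ X) (x : InfPath F X) : Prop :=
  x.fn.obj (Over.mk (F.map μ)) = Over.mk μ

/-- `Z(X) ⊆ F^∞`. -/
def ZObj (F : E ⥤ B) (X : E) : Set (FInf F) := {p | p.1 = X}

/-- `Z(μ) ⊆ F^∞`. -/
def ZMor (F : E ⥤ B) {Y X : E} (μ : Y ⟶ X) : Set (FInf F) :=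
  {p | ∃ h : p.1 = X, InPathOf μ (h ▸ p.2)}

/-- The basic sets `Z(μ)`. -/
def pathBasis (F : E ⥤ B) : Set (Set (FInf F)) :=
  {S | ∃ (Y X : E) (μ : Y ⟶ X), S = ZMor F μ}

/-- The topology on `F^∞` generated by the sets `Z(μ)`. -/
def pathTopology (F : E ⥤ B) : TopologicalSpace (FInf F) :=
  TopologicalSpace.generateFrom (pathBasis F)

/-- The morphism `(u, g) : (g ≫ u) ⟶ u` of a slice category. -/
def oHomW {T : Type u''} [Category.{v''} T] {X A A' : T} {u : A ⟶ X} {v : A' ⟶ X}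
    (g : A' ⟶ A) (w : g ≫ u = v) : Over.mk v ⟶ Over.mk u :=
  Over.homMk g w

/-- The defining relation between `w = res_μ x` and `x = ind_μ w`, on objects:
`x(a ∘ F μ) = μ ∘ w(a)` for all `a`. -/
def IndRel (F : E ⥤ B) {Y X : E} (μ : Y ⟶ X) (w : InfPath F Y) (x : InfPath F X) : Prop :=
  ∀ {A : B} (a : A ⟶ F.obj Y),
    x.fn.obj (Over.mk (a ≫ F.map μ)) = Over.mk ((w.fn.obj (Over.mk a)).hom ≫ μ)

/-- `w = res_μ x`. -/
def ResRel (F : E ⥤ B) {Y X : E} (μ : Y ⟶ X) (x : InfPath F X) (w : InfPath F Y) : Prop :=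
  InPathOf μ x ∧ IndRel F μ w x

/-- `q = ind_μ p`, at the level of `F^∞`. -/
def IndRelP (F : E ⥤ B) {Y X : E} (μ : Y ⟶ X) (pw px : FInf F) : Prop :=
  ∃ (hw : pw.1 = Y) (hx : px.1 = X),
    InPathOf μ (hx ▸ px.2) ∧ IndRel F μ (hw ▸ pw.2) (hx ▸ px.2)

/-- `pw = res_μ px`, at the level of `F^∞`. -/
def ResRelP (F : E ⥤ B) {Y X : E} (μ : Y ⟶ X) (px pw : FInf F) : Prop :=
  ∃ (hw : pw.1 = Y) (hx : px.1 = X), ResRel F μ (hx ▸ px.2) (hw ▸ pw.2)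

/-- `z' = ind_μ (res_ν z)`. -/
def Translates (F : E ⥤ B) {W U V : E} (μ : W ⟶ U) (ν : W ⟶ V)
    (z : InfPath F V) (z' : InfPath F U) : Prop :=
  ∃ w : InfPath F W, ResRel F ν z w ∧ InPathOf μ z' ∧ IndRel F μ w z'

/-- `q = ind_μ (res_ν p)`, at the level of `F^∞`. -/
def TranslatesP (F : E ⥤ B) {W U V : E} (μ : W ⟶ U) (ν : W ⟶ V)
    (p q : FInf F) : Prop :=
  ∃ (hp : p.1 = V) (hq : q.1 = U), Translates F μ ν (hp ▸ p.2) (hq ▸ q.2)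

/-- An element `(μ, ν, x)` of `𝒢_F`. -/
structure PreG (F : E ⥤ B) where
  W : E
  U : E
  V : E
  μ : W ⟶ U
  ν : W ⟶ V
  x : InfPath F V
  mem : InPathOf ν x

/-- The relation `∼` on `𝒢_F`. -/
def GERel (F : E ⥤ B) (g g' : PreG F) : Prop :=
  (∃ hV : g.V = g'.V, hV ▸ g.x = g'.x) ∧
  (∃ (Λ : E) (lam : Λ ⟶ g.V),
     (⟨g.V, g.x⟩ : FInf F) ∈ ZMor F lam ∧
     ZMor F lam ⊆ ZMor F g.ν ∩ ZMor F g'.ν ∧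
     ∀ p ∈ ZMor F lam, ∀ q : FInf F,
       TranslatesP F g.μ g.ν p q ↔ TranslatesP F g'.μ g'.ν p q) ∧
  (∃ (M : B) (a : M ⟶ F.obj g.W) (b : M ⟶ F.obj g'.W),
     MorEq (a ≫ F.map g.μ) (b ≫ F.map g'.μ) ∧ MorEq (a ≫ F.map g.ν) (b ≫ F.map g'.ν))

/-- The groupoid `G_F` as a quotient set. -/
def GF (F : E ⥤ B) := Quot (GERel F)

/-- `k` is a composite of `g` and `h` in `G_F` (at the level of representatives). -/
def CompRel (F : E ⥤ B) (g h k : PreG F) : Prop :=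
  TranslatesP F h.μ h.ν ⟨h.V, h.x⟩ ⟨g.V, g.x⟩ ∧
  ∃ (P : E) (γ : P ⟶ g.W) (η : P ⟶ h.W) (hUV : h.U = g.V),
    γ ≫ g.ν = (η ≫ h.μ) ≫ eqToHom hUV ∧
    InPathOf (γ ≫ g.ν) g.x ∧
    ∃ mem : InPathOf (η ≫ h.ν) h.x,
      GERel F k ⟨P, g.U, h.V, γ ≫ g.μ, η ≫ h.ν, h.x, mem⟩

/-- The basic set `Z(μ,ν) ⊆ G_F`. -/
def ZPair (F : E ⥤ B) {W U V : E} (μ : W ⟶ U) (ν : W ⟶ V) : Set (GF F) :=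
  {g | ∃ (x : InfPath F V) (mem : InPathOf ν x),
        g = Quot.mk (GERel F) ⟨W, U, V, μ, ν, x, mem⟩}

/-- The basic sets `Z(μ,ν)`. -/
def pairBasis (F : E ⥤ B) : Set (Set (GF F)) :=
  {s | ∃ (W U V : E) (μ : W ⟶ U) (ν : W ⟶ V), s = ZPair F μ ν}

/-- The topology on `G_F`. -/
def gTopology (F : E ⥤ B) : TopologicalSpace (GF F) :=
  TopologicalSpace.generateFrom (pairBasis F)

/-- A subcategory of a category: a class of objects and morphisms closed under
identities and composition. -/
structure Subcat (C : Type u'') [Category.{v''} C] where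
  objs : Set C
  homs : ∀ ⦃M N : C⦄, (M ⟶ N) → Prop
  id_mem : ∀ {M : C}, M ∈ objs → homs (𝟙 M)
  comp_mem : ∀ {M N P : C} {f : M ⟶ N} {g : N ⟶ P}, homs f → homs g → homs (f ≫ g)
  src_mem : ∀ {M N : C} {f : M ⟶ N}, homs f → M ∈ objs
  tgt_mem : ∀ {M N : C} {f : M ⟶ N}, homs f → N ∈ objs

instance Subcat.cat {C : Type u''} [Category.{v''} C] (S : Subcat C) : Category S.objs where
  Hom M N := {f : M.1 ⟶ N.1 // S.homs f}
  id M := ⟨𝟙 M.1, S.id_mem M.2⟩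
  comp f g := ⟨f.1 ≫ g.1, S.comp_mem f.2 g.2⟩
  id_comp f := Subtype.ext (Category.id_comp f.1)
  comp_id f := Subtype.ext (Category.comp_id f.1)
  assoc f g h := Subtype.ext (Category.assoc f.1 g.1 h.1)

/-- The inclusion functor of a subcategory. -/
def Subcat.ι {C : Type u''} [Category.{v''} C] (S : Subcat C) : S.objs ⥤ C where
  obj M := M.1
  map f := f.1

/-- `f` is (up to the identifications of objects) the image of a morphism of `E`. -/
def InImage (F : E ⥤ B) {M N : B} (f : M ⟶ N) : Prop :=
  ∃ (Y X : E) (μ : Y ⟶ X) (hY : F.obj Y = M) (hX : F.obj X = N),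
    F.map μ = eqToHom hY ≫ f ≫ eqToHom hX.symm

/-- An aperiodic infinite path. -/
def AperiodicPath (F : E ⥤ B) {X : E} (x : InfPath F X) : Prop :=
  ∀ {Y Y' : E} (α : Y ⟶ X) (β : Y' ⟶ X) (w : FInf F),
    ResRelP F α ⟨X, x⟩ w → ResRelP F β ⟨X, x⟩ w → MorEq α β

/-- Spans in a category, as a type. -/
def SpanT (C : Type u'') [Category.{v''} C] := Σ (P Q R : C), (P ⟶ Q) × (P ⟶ R)


/-- Pairs of composable elements of `G_F`. -/
def ComposablePairs (F : E ⥤ B) : Set (GF F × GF F) :=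
  {p | ∃ g h : PreG F, p.1 = Quot.mk (GERel F) g ∧ p.2 = Quot.mk (GERel F) h ∧
        TranslatesP F h.μ h.ν ⟨h.V, h.x⟩ ⟨g.V, g.x⟩}

/-- A morphism into `F(X)` lifts to a morphism into `X`: apply the section at `X`. -/
lemma LocallySplit.exists_lift {F : E ⥤ B} (hF : LocallySplit F) (X : E) {M : B}
    (b : M ⟶ F.obj X) :
    ∃ (Y : E) (α : Y ⟶ X) (h : F.obj Y = M), F.map α = eqToHom h ≫ b := by
  obtain ⟨x, hx⟩ := hF X
  have h : (Over.post F).obj (x.obj (Over.mk b)) = Over.mk b := Functor.congr_obj hx (Over.mk b)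
  refine ⟨(x.obj (Over.mk b)).left, (x.obj (Over.mk b)).hom, congrArg (fun o => o.left) h, ?_⟩
  have := Over.w (eqToHom h)
  rw [Over.eqToHom_left] at this
  exact this.symm

/-- For a locally split functor, the image is the sieve generated by its objects. -/
lemma LocallySplit.inImage_iff {F : E ⥤ B} (hF : LocallySplit F) {M N : B} (f : M ⟶ N) :
    InImage F f ↔ N ∈ Set.range F.obj := by
  constructor
  · rintro ⟨Y, X, μ, hY, hX, -⟩
    exact ⟨X, hX⟩
  · rintro ⟨X, rfl⟩
    obtain ⟨Y, α, h, hα⟩ := hF.exists_lift X f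
    exact ⟨Y, X, α, h, rfl, by simpa using hα⟩

/-- The image of a locally split functor. Its morphisms are encoded as those whose target is in
the image on objects, which by `LocallySplit.inImage_iff` are exactly the images of morphisms. -/
def imageSubcat (F : E ⥤ B) (hF : LocallySplit F) : Subcat B where
  objs := Set.range F.obj
  homs := fun _ N _ => N ∈ Set.range F.obj
  id_mem h := h
  comp_mem _ h := h
  src_mem := by
    rintro M _ f ⟨X, rfl⟩
    obtain ⟨Y, -, h, -⟩ := hF.exists_lift X f
    exact ⟨Y, h⟩
  tgt_mem h := h

/-- The corestriction of a locally split functor to its image. -/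
def corestrict (F : E ⥤ B) (hF : LocallySplit F) : E ⥤ (imageSubcat F hF).objs where
  obj X := ⟨F.obj X, X, rfl⟩
  map {_ X} f := ⟨F.map f, X, rfl⟩
  map_id X := Subtype.ext (F.map_id X)
  map_comp f g := Subtype.ext (F.map_comp f g)

lemma Subcat.eqToHom_val {C : Type u''} [Category.{v''} C] (S : Subcat C) {M N : S.objs}
    (h : M = N) : (eqToHom h).1 = eqToHom (congrArg Subtype.val h) := by
  cases h; rfl

/-- A functor that is injective on objects and faithful is a monomorphism of categories. -/
lemma functor_cancel {C : Type*} [Category C] {D : Type*} [Category D] {D' : Type*} [Category D']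
    {G H : C ⥤ D} (J : D ⥤ D') [J.Faithful] (hJ : Function.Injective J.obj)
    (h : G ⋙ J = H ⋙ J) : G = H := by
  refine CategoryTheory.Functor.ext (fun X => hJ (Functor.congr_obj h X)) fun X Y f => J.map_injective ?_
  simpa [eqToHom_map] using Functor.congr_hom h f

instance Subcat.ι_faithful {C : Type u''} [Category.{v''} C] (S : Subcat C) : S.ι.Faithful where
  map_injective h := Subtype.ext h

lemma Subcat.post_ι_injective {C : Type u''} [Category.{v''} C] (S : Subcat C) (M : S.objs) :
    Function.Injective (Over.post (X := M) S.ι).obj := by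
  intro a b h
  obtain ⟨a, ⟨⟨⟩⟩, f⟩ := a
  obtain ⟨b, ⟨⟨⟩⟩, g⟩ := b
  have hl : a = b := Subtype.ext (congrArg (fun o => o.left) h)
  subst hl
  have hw := Over.w (eqToHom h)
  rw [Over.eqToHom_left] at hw
  have : f = g := Subtype.ext ((Category.id_comp _).symm.trans hw).symm
  subst this
  rfl

lemma stronglyRightOre_image (F : E ⥤ B) (hF : LocallySplit F) (hB : StronglyRightOre B) :
    StronglyRightOre (imageSubcat F hF).objs := by
  have src : ∀ {P : B} (A : (imageSubcat F hF).objs), (P ⟶ A.1) → P ∈ (imageSubcat F hF).objs :=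
    fun A p => (imageSubcat F hF).src_mem (f := p) A.2
  refine ⟨fun {A X D} m n => ?_, fun {A X D Z₁ Z₂} m n p₁ q₁ p₂ q₂ h₁ h₂ => ?_⟩
  · obtain ⟨P, p, q, h⟩ := hB.1 m.1 n.1
    exact ⟨⟨P, src A p⟩, ⟨p, A.2⟩, ⟨q, X.2⟩, Subtype.ext h⟩
  · obtain ⟨W, a, b, ha, hb⟩ := hB.2 m.1 n.1 p₁.1 q₁.1 p₂.1 q₂.1
      (congrArg Subtype.val h₁) (congrArg Subtype.val h₂)
    exact ⟨⟨W, src Z₁ a⟩, ⟨a, Z₁.2⟩, ⟨b, Z₂.2⟩, Subtype.ext ha, Subtype.ext hb⟩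

/-- A lift of a factorization along the corestriction, seen as a lift along `F`. -/
def ConducheLift.forget {F : E ⥤ B} {hF : LocallySplit F} {Y X : E} {φ : Y ⟶ X}
    {M : (imageSubcat F hF).objs} {l : (corestrict F hF).obj Y ⟶ M}
    {ρ : M ⟶ (corestrict F hF).obj X} (L : ConducheLift (corestrict F hF) φ l ρ) :
    ConducheLift F φ l.1 ρ.1 where
  mid := L.mid
  lam := L.lam
  rho := L.rho
  comp_eq := L.comp_eq
  obj_eq := congrArg Subtype.val L.obj_eq
  map_lam := (congrArg Subtype.val L.map_lam).trans
    (congrArg (l.1 ≫ ·) (Subcat.eqToHom_val _ L.obj_eq.symm))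
  map_rho := (congrArg Subtype.val L.map_rho).trans
    (congrArg (· ≫ ρ.1) (Subcat.eqToHom_val _ L.obj_eq))

lemma isDCF_corestrict (F : E ⥤ B) (hF : LocallySplit F) (hD : IsDCF F) :
    IsDCF (corestrict F hF) := by
  intro Y X φ M l ρ h
  obtain ⟨⟨L⟩, huniq⟩ := hD φ l.1 ρ.1 (congrArg Subtype.val h)
  constructor
  · exact ⟨{ mid := L.mid
             lam := L.lam
             rho := L.rho
             comp_eq := L.comp_eq
             obj_eq := Subtype.ext L.obj_eq
             map_lam := Subtype.ext (L.map_lam.trans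
               (congrArg (l.1 ≫ ·) (Subcat.eqToHom_val _
                 (show M = (corestrict F hF).obj L.mid from Subtype.ext L.obj_eq.symm)).symm))
             map_rho := Subtype.ext (L.map_rho.trans
               (congrArg (· ≫ ρ.1) (Subcat.eqToHom_val _
                 (show (corestrict F hF).obj L.mid = M from Subtype.ext L.obj_eq)).symm)) }⟩
  · intro L₁ L₂
    have h := huniq L₁.forget L₂.forget
    cases L₁
    cases L₂
    cases h
    rfl

lemma locallySplit_corestrict (F : E ⥤ B) (hF : LocallySplit F) :
    LocallySplit (corestrict F hF) := by
  intro X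
  obtain ⟨x, hx⟩ := hF X
  let S := imageSubcat F hF
  let J := Over.post (X := (corestrict F hF).obj X) S.ι
  refine ⟨J ⋙ x, functor_cancel J (S.post_ι_injective _) ?_⟩
  -- `corestrict F hF ⋙ S.ι` is `F` by definition, so the left side is `J ⋙ x ⋙ Over.post F`.
  exact congrArg (J ⋙ ·) hx

theorem statement_3 (F : E ⥤ B) (hF : IsKPF F) :
    ∃ S : Subcat B,
      S.objs = Set.range F.obj ∧
      (∀ {M N : B} (f : M ⟶ N), S.homs f ↔ InImage F f) ∧
      StronglyRightOre S.objs ∧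
      ∃ Fhat : E ⥤ S.objs, Fhat ⋙ S.ι = F ∧ IsKPF Fhat ∧ StronglySurjective Fhat := by
  obtain ⟨hD, hL, hO⟩ := hF
  have hO' := stronglyRightOre_image F hL hO
  have hL' := locallySplit_corestrict F hL
  refine ⟨imageSubcat F hL, rfl, fun f => (hL.inImage_iff f).symm, hO', corestrict F hL, rfl,
    ⟨isDCF_corestrict F hL hD, hL', hO'⟩, ?_, fun X _ b => hL'.exists_lift X b⟩
  rintro ⟨_, X, rfl⟩
  exact ⟨X, rfl⟩

end DCFpaper
end

section
/- Let F : E → B be a discrete Conduché fibration, μ : Y → X a morphism of E, and x ∈ Z(μ). Writing x(c,d) = (x₁(c,d), x₂(c,d)) for the two components of the value of x on a morphism (c,d) of B/F(X), the assignment res_μ(x)(a,b) := (x₂(F(μ),a), x₂(F(μ)∘a, b)) defines a functor from B/F(Y) to E/Y which is a section of the induced functor F : E/Y → B/F(Y); that is, res_μ(x) ∈ Z(Y) = Z(s(μ)). -/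
/-!
Since `x` is a functor on `B/F(X)`, precomposing it with `B/F(Y) ⥤ B/F(X)`, `a ↦ a ≫ F μ`, gives a
functor to `E/X`. Each `a` is also a morphism `a ≫ F μ ⟶ F μ` of `B/F(X)`, and `x(F μ) = μ`, so
functoriality of `x` factors that functor through `E/Y ⥤ E/X` and yields `resFn`. It is a section
because `x` is one: `F` carries the underlying morphism of `x(g)` to that of `g`
(`InfPath.map_left`). All equalities of objects are handled with `eqToHom`.
-/

open CategoryTheory

universe v u v' u' v'' u''

namespace DCFpaper

variable {E : Type u} [Category.{v} E] {B : Type u'} [Category.{v'} B]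

/-- Objects of a slice category agree when their sources agree and, up to that identification,
their structure morphisms agree. -/
theorem over_ext {C : Type u''} [Category.{v''} C] {X : C} {P Q : Over X}
    (h : P.left = Q.left) (w : P.hom = eqToHom h ≫ Q.hom) : P = Q := by
  obtain ⟨A, ⟨⟨⟩⟩, f⟩ := P
  obtain ⟨A', ⟨⟨⟩⟩, f'⟩ := Q
  change A = A' at h
  subst h
  simp at w
  subst w
  rfl

/-- The image under `F` of the source of `x(c)` is the source of `c`. -/
theorem InfPath.obj_left {F : E ⥤ B} {X : E} (x : InfPath F X) (c : Over (F.obj X)) :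
    F.obj (x.fn.obj c).left = c.left :=
  congrArg Comma.left (Functor.congr_obj x.sec c)

/-- `F` sends the component `x₂` of `x` at a morphism `g` of the slice back to the
underlying morphism of `g`. -/
theorem InfPath.map_left {F : E ⥤ B} {X : E} (x : InfPath F X) {c d : Over (F.obj X)}
    (g : c ⟶ d) :
    F.map (x.fn.map g).left =
      eqToHom (x.obj_left c) ≫ g.left ≫ eqToHom (x.obj_left d).symm := by
  have h := congrArg CommaMorphism.left (Functor.congr_hom x.sec g)
  simp only [Functor.id_map, Over.comp_left, Over.eqToHom_left] at h
  exact h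

/-- The functor underlying `res_μ x`. It is `x` precomposed with `Over.map (F.map μ)`, with the
structure morphism to `X` replaced by its factor through `μ`, which is the value of `x` on
`a : a ≫ F μ ⟶ F μ`. -/
def resFn {F : E ⥤ B} {Y X : E} (μ : Y ⟶ X) (x : InfPath F X) (hx : InPathOf μ x) :
    Over (F.obj Y) ⥤ Over Y where
  obj u := Over.mk
    ((x.fn.map (Over.homMk u.hom : (Over.map (F.map μ)).obj u ⟶ Over.mk (F.map μ))).left ≫
      eqToHom (congrArg Comma.left hx))
  map {u v} f := Over.homMk (x.fn.map ((Over.map (F.map μ)).map f)).left (by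
    have h : (Over.map (F.map μ)).map f ≫
        (Over.homMk v.hom : (Over.map (F.map μ)).obj v ⟶ Over.mk (F.map μ)) =
        Over.homMk u.hom := by
      ext
      simp
    simp only [Over.mk_hom]
    rw [← h, Functor.map_comp, Over.comp_left, Category.assoc])
  map_id u := by
    ext
    simp
  map_comp f g := by
    ext
    simp

theorem resFn_sec {F : E ⥤ B} {Y X : E} (μ : Y ⟶ X) (x : InfPath F X) (hx : InPathOf μ x) :
    resFn μ x hx ⋙ Over.post F = 𝟭 (Over (F.obj Y)) := by
  refine CategoryTheory.Functor.ext (fun u => over_ext (x.obj_left ((Over.map (F.map μ)).obj u)) ?_) ?_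
  · change F.map ((x.fn.map (Over.homMk u.hom :
        (Over.map (F.map μ)).obj u ⟶ Over.mk (F.map μ))).left ≫ eqToHom _) = _ ≫ u.hom
    rw [F.map_comp, x.map_left, eqToHom_map]
    simp
    rfl
  · intro u v f
    ext
    rw [Over.comp_left, Over.comp_left, Over.eqToHom_left, Over.eqToHom_left]
    exact x.map_left ((Over.map (F.map μ)).map f)

theorem statement_6 (F : E ⥤ B) (hF : IsDCF F) {Y X : E} (μ : Y ⟶ X)
    (x : InfPath F X) (hx : InPathOf μ x) :
    ∃ y : InfPath F Y,
      ∃ obj_eq : ∀ {A : B} (a : A ⟶ F.obj Y),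
          (y.fn.obj (Over.mk a)).left = (x.fn.obj (Over.mk (a ≫ F.map μ))).left,
        (∀ {A : B} (a : A ⟶ F.obj Y),
          (y.fn.obj (Over.mk a)).hom =
            eqToHom (obj_eq a) ≫ (x.fn.map (oHomW (u := F.map μ) a rfl)).left ≫
              eqToHom (congrArg Comma.left hx)) ∧
        (∀ {A A' : B} (a : A ⟶ F.obj Y) (b : A' ⟶ A),
          (y.fn.map (oHomW (u := a) b rfl)).left =
            eqToHom (obj_eq (b ≫ a)) ≫
              (x.fn.map (oHomW (u := a ≫ F.map μ) (v := (b ≫ a) ≫ F.map μ) b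
                (by simp))).left ≫
              eqToHom (obj_eq a).symm) := by
  refine ⟨⟨resFn μ x hx, resFn_sec μ x hx⟩, fun _ => rfl, fun a => ?_, fun a b => ?_⟩
  · exact (Category.id_comp _).symm
  · exact ((Category.id_comp _).trans (Category.comp_id _)).symm

end DCFpaper
end

section
/- Let F : E → B be a Kumjian-Pask fibration, μ : Y → X a morphism of E, and x ∈ Z(Y). Then there exists a unique infinite path y ∈ Z(μ) such that y(F(μ)∘a) = μ∘x(a) for every morphism a of B with target F(Y) (where y(F(μ)∘a) and x(a) denote the values of the sections y and x on the objects F(μ)∘a and a of the respective slice categories). This path is denoted ind_μ(x). -/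
/-!
For a discrete Conduché fibration `F` the slice functor `Over.post F : Over X ⥤ Over (F.obj X)` is
faithful and a discrete opfibration: given `U` over `X` and `g : F U ⟶ b`, there is exactly one
object `V` over `b` receiving a lift `U ⟶ V` of `g` (`exists_push`, `push_unique`, `post_faithful`).

Composing the section `x` with `μ` gives a functor `indBase μ x : Over (F.obj Y) ⥤ Over X`, which is
the section of `Over.post F` prescribed on the objects `a ≫ F.map μ`. The value of the induced path
at `b` has to be the pushforward of some `indBase μ x (p)` along `q`, for a commutative square
`p ≫ F.map μ = q ≫ b`: such a square exists by the right Ore condition (`exists_isVal`), and the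
pushforward is independent of the square by the strong right Ore condition (`isVal_unique`).
Functoriality follows from faithfulness, as does the uniqueness of the extension.
-/

open CategoryTheory

universe v u v' u' v'' u''

namespace DCFpaper

variable {E : Type u} [Category.{v} E] {B : Type u'} [Category.{v'} B]

/-- Pushforward in slices: lifting a factorization amounts to lifting a morphism out of the image of
an object of `Over X`. -/
theorem exists_push {F : E ⥤ B} (hF : IsDCF F) {X : E} (U : Over X) (b : Over (F.obj X))
    (g : (Over.post F).obj U ⟶ b) :
    ∃ (V : Over X) (f : U ⟶ V) (h : (Over.post F).obj V = b),
      (Over.post F).map f = g ≫ eqToHom h.symm := by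
  obtain ⟨M, ⟨⟨⟩⟩, ρ⟩ := b
  obtain ⟨L⟩ := (hF U.hom g.left ρ (Over.w g).symm).1
  obtain ⟨mid, lam, rho, hc, ho, hl, hr⟩ := L
  change F.obj mid = M at ho
  subst ho
  have hr' : F.map rho = ρ := by simpa using hr
  subst hr'
  refine ⟨Over.mk rho, Over.homMk lam hc, rfl, ?_⟩
  ext
  exact hl

theorem push_unique {F : E ⥤ B} (hF : IsDCF F) {X : E} {U V₁ V₂ : Over X}
    (f₁ : U ⟶ V₁) (f₂ : U ⟶ V₂) (h : (Over.post F).obj V₁ = (Over.post F).obj V₂)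
    (e : (Over.post F).map f₁ ≫ eqToHom h = (Over.post F).map f₂) : V₁ = V₂ := by
  have ho : F.obj V₂.left = F.obj V₁.left := (congrArg (fun W => W.left) h).symm
  have hl : F.map f₂.left = F.map f₁.left ≫ eqToHom ho.symm := by
    have := congrArg Over.Hom.left e
    rw [Over.comp_left, Over.eqToHom_left] at this
    exact this.symm
  have hr : F.map V₂.hom = eqToHom ho ≫ F.map V₁.hom := by
    have := Over.w (eqToHom h.symm)
    rw [Over.eqToHom_left] at this
    exact this.symm
  have key := (hF U.hom (F.map f₁.left) (F.map V₁.hom)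
    (by rw [← F.map_comp, Over.w])).2
    ⟨V₁.left, f₁.left, V₁.hom, Over.w f₁, rfl, by simp, by simp⟩
    ⟨V₂.left, f₂.left, V₂.hom, Over.w f₂, ho, hl, hr⟩
  obtain ⟨A₁, ⟨⟨⟩⟩, r₁⟩ := V₁
  obtain ⟨A₂, ⟨⟨⟩⟩, r₂⟩ := V₂
  injection key with k₁ k₂ k₃
  change A₁ = A₂ at k₁
  subst k₁
  obtain rfl : r₁ = r₂ := eq_of_heq k₃
  rfl

theorem post_faithful {F : E ⥤ B} (hF : IsDCF F) (X : E) :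
    (Over.post F : Over X ⥤ Over (F.obj X)).Faithful where
  map_injective {U V} f₁ f₂ e := by
    have hl : F.map f₂.left = F.map f₁.left := (congrArg Over.Hom.left e).symm
    have key := (hF U.hom (F.map f₁.left) (F.map V.hom)
      (by rw [← F.map_comp, Over.w])).2
      ⟨V.left, f₁.left, V.hom, Over.w f₁, rfl, by simp, by simp⟩
      ⟨V.left, f₂.left, V.hom, Over.w f₂, rfl, by simpa using hl, by simp⟩
    injection key with k₁ k₂ k₃
    exact Over.OverMorphism.ext k₂

/-- The functor `a ↦ μ ∘ x(a)`, through which the induced path is prescribed. -/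
def indBase {F : E ⥤ B} {Y X : E} (μ : Y ⟶ X) (x : InfPath F Y) : Over (F.obj Y) ⥤ Over X :=
  x.fn ⋙ Over.map μ

theorem indBase_post {F : E ⥤ B} {Y X : E} (μ : Y ⟶ X) (x : InfPath F Y) :
    indBase μ x ⋙ Over.post F = Over.map (F.map μ) := by
  have h : (Over.map μ ⋙ Over.post F : Over Y ⥤ Over (F.obj X)) =
      Over.post F ⋙ Over.map (F.map μ) := by
    have hU (U : Over Y) : (Over.map μ ⋙ Over.post F : Over Y ⥤ Over (F.obj X)).obj U =
        (Over.post F ⋙ Over.map (F.map μ)).obj U := congrArg Over.mk (F.map_comp U.hom μ)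
    refine CategoryTheory.Functor.ext hU (fun U V f => ?_)
    ext
    rw [Over.comp_left, Over.comp_left, Over.eqToHom_left, Over.eqToHom_left]
    exact (Category.id_comp _).symm.trans (congrArg _ (Category.comp_id _).symm)
  rw [indBase, Functor.assoc, h, ← Functor.assoc, x.sec, Functor.id_comp]

/-- `V` is a legitimate value of the induced path at `b`: it lies over `b` and receives a morphism
from some `μ ∘ x(p)`. -/
def IsVal {F : E ⥤ B} {Y X : E} (μ : Y ⟶ X) (x : InfPath F Y) (b : Over (F.obj X))
    (V : Over X) : Prop :=
  (Over.post F).obj V = b ∧ ∃ T : Over (F.obj Y), Nonempty ((indBase μ x).obj T ⟶ V)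

theorem exists_isVal {F : E ⥤ B} (hF : IsDCF F) (hB : RightOre B) {Y X : E} (μ : Y ⟶ X)
    (x : InfPath F Y) (b : Over (F.obj X)) : ∃ V, IsVal μ x b V := by
  obtain ⟨P, p, q, hpq⟩ := hB (F.map μ) b.hom
  have h := Functor.congr_obj (indBase_post μ x) (Over.mk p)
  let g : (Over.map (F.map μ)).obj (Over.mk p) ⟶ b := Over.homMk q hpq.symm
  obtain ⟨V, f, hV, -⟩ := exists_push hF ((indBase μ x).obj (Over.mk p)) b (eqToHom h ≫ g)
  exact ⟨V, hV, _, ⟨f⟩⟩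

theorem isVal_unique {F : E ⥤ B} (hF : IsDCF F) (hB : StronglyRightOre B) {Y X : E} (μ : Y ⟶ X)
    (x : InfPath F Y) (b : Over (F.obj X)) {V₁ V₂ : Over X}
    (h₁ : IsVal μ x b V₁) (h₂ : IsVal μ x b V₂) : V₁ = V₂ := by
  obtain ⟨e₁, T₁, ⟨f₁⟩⟩ := h₁
  obtain ⟨e₂, T₂, ⟨f₂⟩⟩ := h₂
  have E₀ := indBase_post μ x
  -- The morphisms `f₁`, `f₂` give two commutative squares on the cospan `(F.map μ, b.hom)`.
  let g₁ : (Over.map (F.map μ)).obj T₁ ⟶ b :=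
    eqToHom (Functor.congr_obj E₀ T₁).symm ≫ (Over.post F).map f₁ ≫ eqToHom e₁
  let g₂ : (Over.map (F.map μ)).obj T₂ ⟶ b :=
    eqToHom (Functor.congr_obj E₀ T₂).symm ≫ (Over.post F).map f₂ ≫ eqToHom e₂
  obtain ⟨W, s, t, hp, hq⟩ := hB.2 (F.map μ) b.hom T₁.hom g₁.left T₂.hom g₂.left
    (Over.w g₁).symm (Over.w g₂).symm
  let T : Over (F.obj Y) := Over.mk (s ≫ T₁.hom)
  let k₁ : T ⟶ T₁ := Over.homMk s rfl
  let k₂ : T ⟶ T₂ := Over.homMk t hp.symm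
  have hk : (Over.map (F.map μ)).map k₁ ≫ g₁ = (Over.map (F.map μ)).map k₂ ≫ g₂ := by
    ext
    exact hq
  refine push_unique hF ((indBase μ x).map k₁ ≫ f₁) ((indBase μ x).map k₂ ≫ f₂)
    (e₁.trans e₂.symm) ?_
  have n₁ := Functor.congr_hom E₀ k₁
  have n₂ := Functor.congr_hom E₀ k₂
  simp only [Functor.comp_map] at n₁ n₂
  have hk' := congrArg (fun m => eqToHom (Functor.congr_obj E₀ T) ≫ m ≫ eqToHom e₂.symm) hk
  simp only [Functor.map_comp, n₁, n₂]
  simpa [g₁, g₂, -Over.post_map] using hk'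

/-- Two infinite paths with the same objects are equal, since slice functors are faithful. -/
theorem infPath_ext {F : E ⥤ B} (hF : IsDCF F) {X : E} {y z : InfPath F X}
    (h : ∀ b, y.fn.obj b = z.fn.obj b) : y = z := by
  have := post_faithful hF X
  obtain ⟨y, hy⟩ := y
  obtain ⟨z, hz⟩ := z
  have : y = z := by
    refine CategoryTheory.Functor.ext h (fun b c f => ?_)
    apply (Over.post F).map_injective
    have a₁ := Functor.congr_hom hy f
    have a₂ := Functor.congr_hom hz f
    simp only [Functor.comp_map] at a₁ a₂
    simp [a₁, a₂, eqToHom_map, -Over.post_map]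
  subst this
  rfl

/-- A dCf reflects identities, so an infinite path to `Y` sends `𝟙` to `𝟙 Y`. -/
theorem infPath_id {F : E ⥤ B} (hF : IsDCF F) {Y : E} (x : InfPath F Y) :
    x.fn.obj (Over.mk (𝟙 (F.obj Y))) = Over.mk (𝟙 Y) := by
  have h := Functor.congr_obj x.sec (Over.mk (𝟙 (F.obj Y)))
  have h' : (Over.post F).obj (Over.mk (𝟙 Y)) = Over.mk (𝟙 (F.obj Y)) := by simp
  refine push_unique hF (𝟙 _) (Over.homMk (x.fn.obj (Over.mk (𝟙 (F.obj Y)))).hom (by simp))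
    (h.trans h'.symm) ?_
  -- Both sides are morphisms to the terminal object of the slice over `F.obj Y`.
  rw [← cancel_mono (eqToHom h')]
  exact Over.mkIdTerminal.hom_ext _ _

/-- Morphisms between the chosen values exist by pushforward, and faithfulness makes the choice a
functor. -/
theorem exists_infPath {F : E ⥤ B} (hF : IsKPF F) {Y X : E} (μ : Y ⟶ X) (x : InfPath F Y) :
    ∃ y : InfPath F X, ∀ b, IsVal μ x b (y.fn.obj b) := by
  obtain ⟨hD, -, hB⟩ := hF
  have := post_faithful hD X
  choose v hv using exists_isVal hD hB.1 μ x
  have hm : ∀ {b c : Over (F.obj X)} (g : b ⟶ c), ∃ f : v b ⟶ v c,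
      (Over.post F).map f = eqToHom (hv b).1 ≫ g ≫ eqToHom (hv c).1.symm := by
    intro b c g
    obtain ⟨V, f, h, e⟩ := exists_push hD (v b) c (eqToHom (hv b).1 ≫ g)
    obtain ⟨T, ⟨k⟩⟩ := (hv b).2
    obtain rfl : V = v c := isVal_unique hD hB μ x c ⟨h, T, ⟨k ≫ f⟩⟩ (hv c)
    exact ⟨f, by simpa using e⟩
  choose m hm using @hm
  refine ⟨⟨{ obj := v, map := fun g => m g, map_id := ?_, map_comp := ?_ }, ?_⟩, hv⟩
  · intro b
    apply (Over.post F).map_injective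
    simp [hm, -Over.post_map]
  · intro b c d g g'
    apply (Over.post F).map_injective
    simp [hm, -Over.post_map]
  · exact CategoryTheory.Functor.ext (fun b => (hv b).1) (fun b c g => hm g)

/-- A path satisfying the defining relation takes only legitimate values, by transport along an
Ore square. -/
theorem isVal_of_indRel {F : E ⥤ B} (hB : RightOre B) {Y X : E} {μ : Y ⟶ X} {x : InfPath F Y}
    {y : InfPath F X} (h : IndRel F μ x y) (b : Over (F.obj X)) : IsVal μ x b (y.fn.obj b) := by
  refine ⟨Functor.congr_obj y.sec b, ?_⟩
  obtain ⟨P, p, q, hpq⟩ := hB (F.map μ) b.hom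
  let g : Over.mk (p ≫ F.map μ) ⟶ b := Over.homMk q hpq.symm
  exact ⟨Over.mk p, ⟨eqToHom (h p).symm ≫ y.fn.map g⟩⟩

theorem statement_7 (F : E ⥤ B) (hF : IsKPF F) {Y X : E} (μ : Y ⟶ X) (x : InfPath F Y) :
    ∃! y : InfPath F X, InPathOf μ y ∧ IndRel F μ x y := by
  obtain ⟨y, hy⟩ := exists_infPath hF μ x
  obtain ⟨hD, -, hB⟩ := hF
  have hr : IndRel F μ x y := fun a =>
    isVal_unique hD hB μ x _ (hy _)
      ⟨Functor.congr_obj (indBase_post μ x) (Over.mk a), Over.mk a, ⟨𝟙 _⟩⟩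
  refine ⟨y, ⟨?_, hr⟩, fun z hz => infPath_ext hD fun b =>
    isVal_unique hD hB μ x b (isVal_of_indRel hB.1 hz.2 b) (hy b)⟩
  -- Membership in `Z(μ)` is the defining relation at `a = 𝟙`.
  have h := hr (𝟙 (F.obj Y))
  rw [infPath_id hD] at h
  simpa using h

end DCFpaper
end

section
/- Let F : E → B be a Kumjian-Pask fibration. Then F^∞, equipped with the topology generated by the sets Z(β) for β a morphism of E, is a Hausdorff topological space. -/
/-!
The sets `Z(μ)` separate points because a discrete Conduché fibration reflects enough data.

* Over different targets `X ≠ Y`, the sets `Z(𝟙 X)` and `Z(𝟙 Y)` are disjoint. They contain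
  all infinite paths to `X` and to `Y`: a section sends the identity to a morphism over an
  identity, and unique factorization lifting forces such a morphism to be an identity
  (`over_eq_id`).
* Over the same target, `E/X → B/F(X)` is faithful (`post_map_injective`), so two distinct
  sections `x`, `y` differ on some object `b` (`InfPath.ext_of_obj`). Then `x ∈ Z(x(b))` and
  `y ∈ Z(y(b))`; these sets are disjoint, since `x(b)` and `y(b)` both lie over `b` and a
  section takes only one value at `b`.
-/

open CategoryTheory

universe v u v' u' v'' u''

namespace DCFpaper

variable {E : Type u} [Category.{v} E] {B : Type u'} [Category.{v'} B]

/-- The functor induced on slices by a discrete Conduché fibration is faithful: `f` and `g`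
give two lifts of the same factorization of `F u`. -/
lemma post_map_injective {F : E ⥤ B} (hF : IsDCF F) {X : E} {u w : Over X} (f g : u ⟶ w)
    (h : (Over.post F).map f = (Over.post F).map g) : f = g := by
  have hl : F.map f.left = F.map g.left := congrArg CommaMorphism.left h
  have hu : F.map u.hom = F.map f.left ≫ F.map w.hom := by
    rw [← F.map_comp, Over.w f]
  have key := (hF u.hom (F.map f.left) (F.map w.hom) hu).2
    ⟨w.left, f.left, w.hom, Over.w f, rfl, by simp, by simp⟩
    ⟨w.left, g.left, w.hom, Over.w g, rfl, by simp [hl], by simp⟩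
  injection key with _ h₂ _
  exact Over.OverMorphism.ext h₂

/-- A morphism lying over an identity is an identity: `𝟙 ≫ α` and `α ≫ 𝟙` lift the same
factorization. -/
lemma over_eq_id {F : E ⥤ B} (hF : IsDCF F) {X : E} (u : Over X)
    (h : (Over.post F).obj u = Over.mk (𝟙 (F.obj X))) : u = Over.mk (𝟙 X) := by
  have hobj : F.obj u.left = F.obj X := congrArg (fun o : Over (F.obj X) => o.left) h
  have hmap : F.map u.hom = eqToHom hobj := by
    have aux : ∀ {o : Over (F.obj X)} (e : o = Over.mk (𝟙 (F.obj X))),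
        o.hom = eqToHom (congrArg (fun o : Over (F.obj X) => o.left) e) := by
      rintro _ rfl
      simp
    exact aux h
  have key := (hF u.hom (F.map u.hom) (𝟙 (F.obj X)) (by simp)).2
    ⟨X, u.hom, 𝟙 X, by simp, rfl, by simp, by simp⟩
    ⟨u.left, 𝟙 u.left, u.hom, by simp, hobj, by simp [hmap], by simp [hmap]⟩
  obtain ⟨U, ⟨⟨⟩⟩, a⟩ := u
  injection key with h₁ _ h₃
  subst h₁
  exact congrArg Over.mk (eq_of_heq h₃).symm

lemma InfPath.post_obj {F : E ⥤ B} {X : E} (x : InfPath F X) (b : Over (F.obj X)) :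
    (Over.post F).obj (x.fn.obj b) = b :=
  Functor.congr_obj x.sec b

/-- Every infinite path passes through each of its values. -/
lemma InfPath.inPathOf_obj {F : E ⥤ B} {X : E} (x : InfPath F X) (b : Over (F.obj X)) :
    InPathOf (x.fn.obj b).hom x :=
  congrArg x.fn.obj (x.post_obj b)

lemma InfPath.inPathOf_id {F : E ⥤ B} (hF : IsDCF F) {X : E} (x : InfPath F X) :
    InPathOf (𝟙 X) x := by
  have h : x.fn.obj (Over.mk (𝟙 (F.obj X))) = Over.mk (𝟙 X) :=
    over_eq_id hF _ (x.post_obj _)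
  rw [← F.map_id] at h
  exact h

/-- An infinite path is determined by its values on objects. -/
lemma InfPath.ext_of_obj {F : E ⥤ B} (hF : IsDCF F) {X : E} (x y : InfPath F X)
    (h : ∀ b, x.fn.obj b = y.fn.obj b) : x = y := by
  have aux : ∀ {u w u' w' : Over X} (_ : u = u') (_ : w = w') (f : u ⟶ w) (g : u' ⟶ w'),
      HEq ((Over.post F).map f) ((Over.post F).map g) → HEq f g := by
    rintro _ _ _ _ rfl rfl f g hfg
    exact heq_of_eq (post_map_injective hF f g (eq_of_heq hfg))
  have hfn : x.fn = y.fn := by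
    refine Functor.hext h fun b c f => aux (h b) (h c) _ _ ?_
    have hx : HEq ((x.fn ⋙ Over.post F).map f) ((𝟭 _ : Over (F.obj X) ⥤ _).map f) := by
      rw [x.sec]
    have hy : HEq ((y.fn ⋙ Over.post F).map f) ((𝟭 _ : Over (F.obj X) ⥤ _).map f) := by
      rw [y.sec]
    exact hx.trans hy.symm
  cases x
  cases y
  cases hfn
  rfl

theorem statement_12 (F : E ⥤ B) (hF : IsKPF F) :
    @T2Space (FInf F) (pathTopology F) := by
  let _ : TopologicalSpace (FInf F) := pathTopology F
  have hD : IsDCF F := hF.1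
  have hopen : ∀ {Y X : E} (μ : Y ⟶ X), IsOpen (ZMor F μ) := fun μ =>
    TopologicalSpace.isOpen_generateFrom_of_mem ⟨_, _, μ, rfl⟩
  refine ⟨?_⟩
  rintro ⟨X, x⟩ ⟨Y, y⟩ hne
  by_cases hXY : X = Y
  · subst hXY
    obtain ⟨b, hb⟩ : ∃ b, x.fn.obj b ≠ y.fn.obj b := by
      by_contra! hall
      exact hne (by rw [InfPath.ext_of_obj hD x y hall])
    refine ⟨ZMor F (x.fn.obj b).hom, ZMor F (y.fn.obj b).hom, hopen _, hopen _,
      ⟨rfl, x.inPathOf_obj b⟩, ⟨rfl, y.inPathOf_obj b⟩, ?_⟩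
    rw [Set.disjoint_left]
    rintro ⟨Z, z⟩ ⟨hZ, h₁⟩ ⟨_, h₂⟩
    cases hZ
    have e₁ : z.fn.obj b = x.fn.obj b := (congrArg z.fn.obj (x.post_obj b)).symm.trans h₁
    have e₂ : z.fn.obj b = y.fn.obj b := (congrArg z.fn.obj (y.post_obj b)).symm.trans h₂
    exact hb (e₁.symm.trans e₂)
  · refine ⟨ZMor F (𝟙 X), ZMor F (𝟙 Y), hopen _, hopen _,
      ⟨rfl, x.inPathOf_id hD⟩, ⟨rfl, y.inPathOf_id hD⟩, ?_⟩
    rw [Set.disjoint_left]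
    rintro p ⟨h₁, _⟩ ⟨h₂, _⟩
    exact hXY (h₁.symm.trans h₂)

end DCFpaper
end
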